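/- Then the leading-order density of the k-th stage has vanishing spatial gradient: ∇ρ₀ᵏ(x) = 0 for all x ∈ ℝ^d. (Multiply the stage momentum equation by ε², let ε → 0, and use that ∇ρ₀ˡ = 0 for all earlier stages and a_{kk} ≠ 0.) -/

import Mathlib

/-!
Multiplying the momentum update by `ε²` removes every negative power of `ε`. Each spatial
derivative occurring in it is then the `y`-derivative of a function that is jointly smooth in
`(ε, y)` near `(0, x)`, hence is continuous in `ε` at `0` (`continuousAt_pder_param`), so both
sides may be evaluated at `ε = 0` by uniqueness of limits. The momentum and convection terms
vanish with the factor `ε²`; the terms `∇((ρ₀ˡ)^γ - ρ₀ˡ)` and `∇ρ₀ˡ` with `l < k` vanish by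
well-preparedness. What remains is `Δt * a k * ∇ρ₀ᵏ = 0`.

The density `ρ₀ + ε²ρ₂` need not be positive everywhere for a given `ε`, but it is positive near
`(0, x)`, which suffices for smoothness of the power; the quotient `q ⊗ q / ρ` equals
`ρ u ⊗ u` even where `ρ = 0`, because division by zero yields zero.
-/

open Real

/-- Spatial partial derivative in direction `i`. -/
noncomputable def pder {d : ℕ} (f : (Fin d → ℝ) → ℝ) (i : Fin d) (x : Fin d → ℝ) : ℝ :=
  fderiv ℝ f x (Pi.single i 1)

/-- Spatial divergence of a vector field on `ℝ^d`. -/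
noncomputable def divg {d : ℕ} (w : (Fin d → ℝ) → (Fin d → ℝ)) (x : Fin d → ℝ) : ℝ :=
  ∑ i, pder (fun y => w y i) i x

open Filter Topology

/-- The spatial derivative of a jointly smooth family depends continuously on the parameter. -/
lemma continuousAt_pder_param {d : ℕ} (f : ℝ → (Fin d → ℝ) → ℝ) (x : Fin d → ℝ) (i : Fin d)
    (hf : ContDiffAt ℝ 1 (Function.uncurry f) (0, x)) :
    ContinuousAt (fun ε => pder (f ε) i x) 0 := by
  have h : ContDiffAt ℝ 0 (fun ε => fderiv ℝ (f ε) x) 0 :=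
    ContDiffAt.fderiv (g := fun _ => x) hf contDiffAt_const (by simp)
  exact h.continuousAt.clm_apply continuousAt_const

lemma contDiffAt_perturbed {d : ℕ} {g h : (Fin d → ℝ) → ℝ} (n : ℕ) (x : Fin d → ℝ)
    (hg : ContDiff ℝ 1 g) (hh : ContDiff ℝ 1 h) :
    ContDiffAt ℝ 1 (fun p : ℝ × (Fin d → ℝ) => g p.2 + p.1 ^ n * h p.2) (0, x) :=
  ((hg.comp contDiff_snd).add ((contDiff_fst.pow n).mul (hh.comp contDiff_snd))).contDiffAt

/-- A pressure of the form `r ^ γ - r` inherits a vanishing derivative from `r`. -/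
lemma pder_rpow_sub_self_eq_zero {d : ℕ} {r : (Fin d → ℝ) → ℝ} {x : Fin d → ℝ} (i : Fin d)
    (γ : ℝ) (hr : DifferentiableAt ℝ r x) (hpos : 0 < r x) (h0 : pder r i x = 0) :
    pder (fun y => r y ^ γ - r y) i x = 0 := by
  have h := (hr.hasFDerivAt.rpow_const (p := γ) (Or.inl hpos.ne')).sub hr.hasFDerivAt
  unfold pder at h0 ⊢
  have h' : fderiv ℝ (fun y => r y ^ γ - r y) x = _ := h.fderiv
  rw [h']
  simp [h0]

/-- in the `k`-th stage of the IMEX-RK time semi-discrete scheme with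
`a_{kk} ≠ 0`, applied to data `ρᵐ_ε = ρ₀ᵐ + ε²ρ₂ᵐ`, `qᵐ_ε = ρᵐ_ε(u₀ᵐ + ε u₁ᵐ)`
(labels `m = 0` for `n` and `m = 1, …, k` for the stages) which are well-prepared up
to stage `k-1` (`∇ρ₀ᵐ = 0` for `m ∈ {n, 1, …, k-1}`), if the stage momentum update
holds for every `ε ∈ (0,1]`, then the leading-order density of the `k`-th stage has
vanishing spatial gradient: `∇ρ₀ᵏ = 0` on `ℝ^d`. -/
theorem imex_stage_leading_density_gradient_vanishes
    {d : ℕ} (Δt γ : ℝ) (hΔt : 0 < Δt) (hγ : 1 ≤ γ)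
    (k : ℕ) (hk : 1 ≤ k) (aE a : ℕ → ℝ) (hakk : a k ≠ 0)
    -- coefficient functions; label 0 stands for the data at time tⁿ
    (r0 r2 : ℕ → (Fin d → ℝ) → ℝ) (u0 u1 : ℕ → (Fin d → ℝ) → (Fin d → ℝ))
    (hr0 : ∀ m ∈ Finset.range (k + 1), ContDiff ℝ (⊤ : ℕ∞) (r0 m))
    (hr2 : ∀ m ∈ Finset.range (k + 1), ContDiff ℝ (⊤ : ℕ∞) (r2 m))
    (hu0 : ∀ m ∈ Finset.range (k + 1), ContDiff ℝ (⊤ : ℕ∞) (u0 m))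
    (hu1 : ∀ m ∈ Finset.range (k + 1), ContDiff ℝ (⊤ : ℕ∞) (u1 m))
    (hr0pos : ∀ m ∈ Finset.range (k + 1), ∀ x, 0 < r0 m x)
    -- well-preparedness of the data and of all earlier stages: ∇ρ₀ᵐ = 0, m ≤ k-1
    (hwp : ∀ m ∈ Finset.range k, ∀ (x : Fin d → ℝ) (i : Fin d), pder (r0 m) i x = 0)
    -- k-th stage momentum update, for every ε ∈ (0,1]
    (mom : ∀ ε ∈ Set.Ioc (0 : ℝ) 1, ∀ (x : Fin d → ℝ) (j : Fin d),
      (r0 k x + ε ^ 2 * r2 k x) * (u0 k x j + ε * u1 k x j)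
        = (r0 0 x + ε ^ 2 * r2 0 x) * (u0 0 x j + ε * u1 0 x j)
          - Δt * ∑ l ∈ Finset.Icc 1 (k - 1), aE l *
              ((∑ i, pder (fun y =>
                  ((r0 l y + ε ^ 2 * r2 l y) * (u0 l y j + ε * u1 l y j))
                    * ((r0 l y + ε ^ 2 * r2 l y) * (u0 l y i + ε * u1 l y i))
                    / (r0 l y + ε ^ 2 * r2 l y)) i x)
                + (1 / ε ^ 2) * pder (fun y =>
                    (r0 l y + ε ^ 2 * r2 l y) ^ γ - (r0 l y + ε ^ 2 * r2 l y)) j x)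
          - Δt * ∑ l ∈ Finset.Icc 1 k, a l *
              ((1 / ε ^ 2) * pder (fun y => r0 l y + ε ^ 2 * r2 l y) j x)) :
    ∀ (x : Fin d → ℝ) (i : Fin d), pder (r0 k) i x = 0 := by
  intro x j
  -- The four families of `ε`-dependent quantities in the update.
  let Q : ℕ → ℝ → ℝ := fun m ε => (r0 m x + ε ^ 2 * r2 m x) * (u0 m x j + ε * u1 m x j)
  let D : ℕ → Fin d → ℝ → ℝ := fun l i ε => pder (fun y =>
    ((r0 l y + ε ^ 2 * r2 l y) * (u0 l y j + ε * u1 l y j))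
      * ((r0 l y + ε ^ 2 * r2 l y) * (u0 l y i + ε * u1 l y i))
      / (r0 l y + ε ^ 2 * r2 l y)) i x
  let P : ℕ → ℝ → ℝ := fun l ε => pder (fun y =>
    (r0 l y + ε ^ 2 * r2 l y) ^ γ - (r0 l y + ε ^ 2 * r2 l y)) j x
  let R : ℕ → ℝ → ℝ := fun l ε => pder (fun y => r0 l y + ε ^ 2 * r2 l y) j x
  have h1 : (1 : WithTop ℕ∞) ≤ ((⊤ : ℕ∞) : WithTop ℕ∞) := by exact_mod_cast le_top
  have hρ : ∀ l ∈ Finset.range (k + 1), ContDiffAt ℝ 1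
      (fun p : ℝ × (Fin d → ℝ) => r0 l p.2 + p.1 ^ 2 * r2 l p.2) (0, x) := fun l hl =>
    contDiffAt_perturbed 2 x ((hr0 l hl).of_le h1) ((hr2 l hl).of_le h1)
  have hu : ∀ l ∈ Finset.range (k + 1), ∀ i, ContDiffAt ℝ 1
      (fun p : ℝ × (Fin d → ℝ) => u0 l p.2 i + p.1 * u1 l p.2 i) (0, x) := fun l hl i => by
    simpa using contDiffAt_perturbed 1 x (contDiff_pi.1 ((hu0 l hl).of_le h1) i)
      (contDiff_pi.1 ((hu1 l hl).of_le h1) i)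
  have hQ : ∀ m, ContinuousAt (Q m) 0 := fun m => by
    apply Continuous.continuousAt
    fun_prop
  have hR : ∀ l ∈ Finset.range (k + 1), ContinuousAt (R l) 0 := fun l hl =>
    continuousAt_pder_param (fun ε y => r0 l y + ε ^ 2 * r2 l y) x j (hρ l hl)
  have hP : ∀ l ∈ Finset.range (k + 1), ContinuousAt (P l) 0 := fun l hl => by
    refine continuousAt_pder_param
      (fun ε y => (r0 l y + ε ^ 2 * r2 l y) ^ γ - (r0 l y + ε ^ 2 * r2 l y)) x j ?_
    refine ((hρ l hl).rpow_const_of_ne ?_).sub (hρ l hl)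
    simpa using (hr0pos l hl x).ne'
  have hD : ∀ l ∈ Finset.range (k + 1), ∀ i, ContinuousAt (D l i) 0 := fun l hl i => by
    have hEq : D l i = fun ε => pder (fun y => (u0 l y j + ε * u1 l y j)
        * ((r0 l y + ε ^ 2 * r2 l y) * (u0 l y i + ε * u1 l y i))) i x := by
      funext ε
      simp only [D]
      congr 1
      funext y
      by_cases h : r0 l y + ε ^ 2 * r2 l y = 0
      · simp [h]
      · field_simp
    rw [hEq]
    exact continuousAt_pder_param (fun ε y => (u0 l y j + ε * u1 l y j)
      * ((r0 l y + ε ^ 2 * r2 l y) * (u0 l y i + ε * u1 l y i))) x i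
      ((hu l hl j).mul ((hρ l hl).mul (hu l hl i)))
  have hmemE : ∀ l ∈ Finset.Icc 1 (k - 1), l ∈ Finset.range k := fun l hl => by
    rw [Finset.mem_Icc] at hl
    rw [Finset.mem_range]
    omega
  have hsucc : ∀ l ∈ Finset.range k, l ∈ Finset.range (k + 1) := fun l hl => by
    rw [Finset.mem_range] at hl ⊢
    omega
  have hmemI : ∀ l ∈ Finset.Icc 1 k, l ∈ Finset.range (k + 1) := fun l hl => by
    rw [Finset.mem_Icc] at hl
    rw [Finset.mem_range]
    omega
  let L : ℝ → ℝ := fun ε => ε ^ 2 * Q k ε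
  let M : ℝ → ℝ := fun ε => ε ^ 2 * Q 0 ε
    - Δt * ∑ l ∈ Finset.Icc 1 (k - 1), aE l * (ε ^ 2 * (∑ i, D l i ε) + P l ε)
    - Δt * ∑ l ∈ Finset.Icc 1 k, a l * R l ε
  have hsq : ContinuousAt (fun ε : ℝ => ε ^ 2) 0 := (continuous_pow 2).continuousAt
  have hL : ContinuousAt L 0 := hsq.mul (hQ k)
  have hM : ContinuousAt M 0 := by
    refine ((hsq.mul (hQ 0)).sub (continuousAt_const.mul ?_)).sub (continuousAt_const.mul ?_)
    · refine tendsto_finsetSum _ fun l hl => ?_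
      have hl' := hsucc l (hmemE l hl)
      exact continuousAt_const.mul
        ((hsq.mul (tendsto_finsetSum _ fun i _ => hD l hl' i)).add (hP l hl'))
    · exact tendsto_finsetSum _ fun l hl => continuousAt_const.mul (hR l (hmemI l hl))
  have hLM : L =ᶠ[𝓝[>] 0] M := by
    filter_upwards [Ioc_mem_nhdsGT (zero_lt_one' ℝ)] with ε hε
    have hε0 : ε ≠ 0 := hε.1.ne'
    have hm : Q k ε = Q 0 ε
      - Δt * ∑ l ∈ Finset.Icc 1 (k - 1), aE l * ((∑ i, D l i ε) + (1 / ε ^ 2) * P l ε)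
      - Δt * ∑ l ∈ Finset.Icc 1 k, a l * ((1 / ε ^ 2) * R l ε) := mom ε hε x j
    simp only [L, M]
    have hE : ∑ l ∈ Finset.Icc 1 (k - 1), aE l * (ε ^ 2 * (∑ i, D l i ε) + P l ε) = ε ^ 2 *
        ∑ l ∈ Finset.Icc 1 (k - 1), aE l * ((∑ i, D l i ε) + (1 / ε ^ 2) * P l ε) := by
      rw [Finset.mul_sum]
      refine Finset.sum_congr rfl fun l _ => ?_
      field_simp
    have hI : ∑ l ∈ Finset.Icc 1 k, a l * R l ε = ε ^ 2 *
        ∑ l ∈ Finset.Icc 1 k, a l * ((1 / ε ^ 2) * R l ε) := by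
      rw [Finset.mul_sum]
      refine Finset.sum_congr rfl fun l _ => ?_
      field_simp
    rw [hm, hE, hI]
    ring
  have hlim : L 0 = M 0 := tendsto_nhds_unique
    ((hL.tendsto.mono_left nhdsWithin_le_nhds).congr' hLM)
    (hM.tendsto.mono_left nhdsWithin_le_nhds)
  have hP0 : ∀ l ∈ Finset.Icc 1 (k - 1), P l 0 = 0 := fun l hl => by
    have hl' := hsucc l (hmemE l hl)
    have h := pder_rpow_sub_self_eq_zero j γ
      (((hr0 l hl').of_le h1).differentiable one_ne_zero x) (hr0pos l hl' x)
      (hwp l (hmemE l hl) x j)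
    simpa [P] using h
  have hR0 : ∀ l, R l 0 = pder (r0 l) j x := fun l => by simp [R]
  have hsumE : ∑ l ∈ Finset.Icc 1 (k - 1),
      aE l * ((0 : ℝ) ^ 2 * (∑ i, D l i 0) + P l 0) = 0 :=
    Finset.sum_eq_zero fun l hl => by simp [hP0 l hl]
  have hsumI : ∑ l ∈ Finset.Icc 1 k, a l * R l 0 = a k * pder (r0 k) j x := by
    rw [Finset.sum_eq_single_of_mem k (Finset.mem_Icc.2 ⟨hk, le_rfl⟩), hR0]
    intro l hl hne
    have hlt : l ∈ Finset.range k :=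
      Finset.mem_range.2 (lt_of_le_of_ne (Finset.mem_Icc.1 hl).2 hne)
    rw [hR0, hwp l hlt x j, mul_zero]
  simp only [L, M] at hlim
  rw [hsumE, hsumI] at hlim
  have hz : Δt * (a k * pder (r0 k) j x) = 0 := by linarith
  exact (mul_eq_zero.1 ((mul_eq_zero.1 hz).resolve_left hΔt.ne')).resolve_left hakk
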